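/- Assume Assumption 1 holds and fix m ∈ (−1,1). For every deterministic c ∈ (0,γ) there exists a unique ã ∈ (0,ς) such that G*(ã) = c, and a unique λ̃ ∈ (0,∞) such that G'(λ̃) = ã. -/

import Mathlib

open MeasureTheory Real Filter Set
open scoped ENNReal Topology BigOperators

noncomputable section

/-- Assumption 1 of the paper, phrased for the law `μ` of `h₁`: `μ` has an absolutely
continuous part, small balls around `0` have linearly bounded mass, the density is
bounded below on some interval, and the first three (absolute) moments are finite. -/
structure Assumption1 (μ : Measure ℝ) : Prop where
  isProb : IsProbabilityMeasure μ
  acPart : ¬ μ.MutuallySingular (volume : Measure ℝ)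
  smallBall : ∃ ε > (0:ℝ), ∃ p₁ > (0:ℝ), ∀ t ∈ Set.Ico (0:ℝ) ε,
    (μ {x : ℝ | |x| < t}).toReal ≤ p₁ * t
  densityLB : ∃ c d p₂ : ℝ, c < d ∧ 0 < p₂ ∧
    ∀ s : Set ℝ, s ⊆ Set.Icc c d → MeasurableSet s →
      ENNReal.ofReal p₂ * volume s ≤ μ s
  intAbs : Integrable (fun x : ℝ => |x|) μ
  intSq : Integrable (fun x : ℝ => x ^ 2) μ
  intCube : Integrable (fun x : ℝ => |x| ^ 3) μ

/-- `g(λ) = log(((1+m)/2)e^{λ(1−m)} + ((1−m)/2)e^{−λ(1+m)})`. -/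
def gfun (m lam : ℝ) : ℝ :=
  Real.log ((1 + m) / 2 * Real.exp (lam * (1 - m)) + (1 - m) / 2 * Real.exp (-(lam * (1 + m))))

/-- `G(λ) = E[g(λ h₁)] = E[log((1+m)e^{λ(1−m)h₁} + (1−m)e^{−λ(1+m)h₁})] − log 2`. -/
def Gf (μ : Measure ℝ) (m lam : ℝ) : ℝ := ∫ x, gfun m (lam * x) ∂μ

/-- `G*(a) = sup_{λ∈ℝ}(λa − G(λ))`. -/
def Gstar (μ : Measure ℝ) (m a : ℝ) : ℝ := ⨆ lam : ℝ, (lam * a - Gf μ m lam)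

/-- `ς = −m ψ₁ + ψ₃`. -/
def sigmaBar (μ : Measure ℝ) (m : ℝ) : ℝ := -m * ∫ x, x ∂μ + ∫ x, |x| ∂μ

/-- `γ = −E[log(1 + sign(h₁)m)] + log 2`. -/
def gammaBar (μ : Measure ℝ) (m : ℝ) : ℝ :=
  -(∫ x, Real.log (1 + Real.sign x * m) ∂μ) + Real.log 2


def TT (p q u : ℝ) : ℝ := 1 - 2 * q / (p * exp (2 * u) + q)
def LL (p q u : ℝ) : ℝ := u + Real.log (p + q * exp (-(2 * u)))

lemma TT_neg {p q : ℝ} (hp : 0 < p) (hq : 0 < q) (u : ℝ) : TT p q (-u) = - TT q p u := by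
  unfold TT
  have e : exp (2 * -u) = (exp (2 * u))⁻¹ := by rw [← Real.exp_neg]; ring_nf
  rw [e]
  have := exp_pos (2 * u)
  have h1 : 0 < q * exp (2 * u) + p := by positivity
  have h2 : 0 < p * (exp (2 * u))⁻¹ + q := by positivity
  have h3 : 0 < p + q * exp (2 * u) := by positivity
  field_simp
  ring

lemma LL_neg {p q : ℝ} (hp : 0 < p) (hq : 0 < q) (u : ℝ) : LL p q (-u) = LL q p u := by
  unfold LL
  have e : exp (-(2 * u)) = (exp (2 * u))⁻¹ := by rw [← Real.exp_neg]
  have := exp_pos (2 * u)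
  have : p + q * exp (-(2 * -u)) = exp (2 * u) * (q + p * exp (-(2 * u))) := by
    rw [e, show -(2 * -u) = 2 * u by ring]; field_simp; ring
  rw [this, Real.log_mul (by positivity) (by positivity), Real.log_exp]
  ring

lemma LL_deriv {p q : ℝ} (hp : 0 < p) (hq : 0 < q) (u : ℝ) : HasDerivAt (LL p q) (TT p q u) u := by
  unfold LL TT
  have e : exp (2 * u) = (exp (-(2 * u)))⁻¹ := by rw [← Real.exp_neg]; ring_nf
  have := exp_pos (-(2 * u))
  have h1 : HasDerivAt (fun u : ℝ => p + q * exp (-(2 * u))) (q * (exp (-(2 * u)) * (-(2 * 1)))) u :=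
    ((((hasDerivAt_id u).const_mul 2).neg.exp).const_mul q).const_add p
  have h2 := (hasDerivAt_id u).add (h1.log (by positivity))
  refine HasDerivAt.congr_deriv (f := fun u : ℝ => u + Real.log (p + q * exp (-(2 * u)))) h2 ?_
  rw [e]
  have h3 : 0 < p * (exp (-(2 * u)))⁻¹ + q := by positivity
  have h4 : 0 < p + q * exp (-(2 * u)) := by positivity
  field_simp
  ring

lemma TT_mono {p q : ℝ} (hp : 0 < p) (hq : 0 < q) : StrictMono (TT p q) := by
  intro u v h
  unfold TT
  have := exp_pos (2 * u)
  have : 2 * q / (p * exp (2 * v) + q) < 2 * q / (p * exp (2 * u) + q) := by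
    gcongr
  linarith

lemma TT_lt {p q : ℝ} (hp : 0 < p) (hq : 0 < q) (u : ℝ) : TT p q u < 1 := by
  unfold TT
  have := exp_pos (2 * u)
  have : 0 < 2 * q / (p * exp (2 * u) + q) := by positivity
  linarith

lemma TT_abs {p q : ℝ} (hp : 0 < p) (hq : 0 < q) (u : ℝ) : |TT p q u| ≤ 1 := by
  rw [abs_le]
  have h1 := TT_lt hp hq u
  have h2 := TT_lt hq hp (-u)
  rw [TT_neg hq hp] at h2
  constructor <;> linarith

lemma TT_cont {p q : ℝ} (hp : 0 < p) (hq : 0 < q) : Continuous (TT p q) := by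
  unfold TT
  refine continuous_const.sub (continuous_const.div (by fun_prop) ?_)
  intro u
  have := exp_pos (2 * u)
  positivity

lemma tendsto_e : Tendsto (fun u : ℝ => exp (-(2 * u))) atTop (𝓝 0) :=
  Real.tendsto_exp_neg_atTop_nhds_zero.comp (tendsto_id.const_mul_atTop (by norm_num : (0:ℝ) < 2))

lemma tendsto_ue : Tendsto (fun u : ℝ => u * exp (-(2 * u))) atTop (𝓝 0) := by
  have := ((Real.tendsto_pow_mul_exp_neg_atTop_nhds_zero 1).comp
    (tendsto_id.const_mul_atTop (by norm_num : (0:ℝ) < 2))).const_mul (1/2)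
  simp only [mul_zero] at this
  refine this.congr fun u => ?_
  simp only [Function.comp, id]
  ring

lemma TT_eq {p q : ℝ} (hp : 0 < p) (hq : 0 < q) (u : ℝ) :
    TT p q u = 1 - 2 * q * exp (-(2 * u)) / (p + q * exp (-(2 * u))) := by
  unfold TT
  have e : exp (2 * u) = (exp (-(2 * u)))⁻¹ := by rw [← Real.exp_neg]; ring_nf
  have := exp_pos (-(2 * u))
  rw [e]
  have h3 : 0 < p * (exp (-(2 * u)))⁻¹ + q := by positivity
  have h4 : 0 < p + q * exp (-(2 * u)) := by positivity
  field_simp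

lemma TT_tendsto {p q : ℝ} (hp : 0 < p) (hq : 0 < q) : Tendsto (TT p q) atTop (𝓝 1) := by
  have h := tendsto_const_nhds (x := (1:ℝ)) |>.sub
    ((tendsto_e.const_mul (2 * q)).div ((tendsto_e.const_mul q).const_add p) (by simp; positivity))
  simp only [mul_zero, add_zero, zero_div, sub_zero] at h
  exact h.congr fun u => (TT_eq hp hq u).symm

lemma TT_tendsto' {p q : ℝ} (hp : 0 < p) (hq : 0 < q) : Tendsto (TT p q) atBot (𝓝 (-1)) := by
  have := ((TT_tendsto hq hp).comp tendsto_neg_atBot_atTop).neg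
  refine this.congr fun u => ?_
  have := TT_neg hp hq (-u)
  simp at this
  simp [this]

def KK (p q u : ℝ) : ℝ := u * TT p q u - LL p q u

lemma KK_tendsto {p q : ℝ} (hp : 0 < p) (hq : 0 < q) :
    Tendsto (KK p q) atTop (𝓝 (-Real.log p)) := by
  have hd := (tendsto_e.const_mul q).const_add p
  have h := ((tendsto_ue.const_mul (-(2 * q))).div hd (by simp; positivity)).sub
    (hd.log (by simp; positivity))
  simp only [mul_zero, add_zero, zero_div, zero_sub] at h
  refine h.congr fun u => ?_
  unfold KK LL
  rw [TT_eq hp hq]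
  simp only [Pi.div_apply]
  ring

lemma KK_tendsto' {p q : ℝ} (hp : 0 < p) (hq : 0 < q) :
    Tendsto (KK p q) atBot (𝓝 (-Real.log q)) := by
  have := ((KK_tendsto hq hp).comp tendsto_neg_atBot_atTop)
  refine this.congr fun u => ?_
  have h1 := TT_neg hp hq (-u)
  have h2 := LL_neg hp hq (-u)
  simp at h1 h2
  simp [KK, h1, h2]

lemma tangent {f f' : ℝ → ℝ} (h : ∀ x, HasDerivAt f (f' x) x) (hm : Monotone f') (x y : ℝ) :
    f x + f' x * (y - x) ≤ f y := by
  have hd : deriv f = f' := funext fun x => (h x).deriv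
  have hc : ConvexOn ℝ univ f := Monotone.convexOn_univ_of_deriv
    (fun x => (h x).differentiableAt) (hd ▸ hm)
  rcases lt_trichotomy x y with hxy | rfl | hxy
  · have := hc.le_slope_of_hasDerivAt (mem_univ x) (mem_univ y) hxy (h x)
    rw [slope_def_field, le_div_iff₀ (by linarith)] at this
    linarith
  · simp
  · have := hc.slope_le_of_hasDerivAt (mem_univ y) (mem_univ x) hxy (h x)
    rw [slope_def_field, div_le_iff₀ (by linarith)] at this
    linarith

lemma LL_zero {p q : ℝ} (hpq : p + q = 1) : LL p q 0 = 0 := by simp [LL, hpq]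

lemma KK_nonneg {p q : ℝ} (hp : 0 < p) (hq : 0 < q) (hpq : p + q = 1) (u : ℝ) : 0 ≤ KK p q u := by
  have := tangent (LL_deriv hp hq) (TT_mono hp hq).monotone u 0
  rw [LL_zero hpq] at this
  unfold KK
  linarith

lemma KK_le_aux {p q : ℝ} (hp : 0 < p) (hq : 0 < q) (u : ℝ) (hu : 0 ≤ u) :
    KK p q u ≤ - Real.log p := by
  have h1 := (abs_le.1 (TT_abs hp hq u)).2
  have h2 : Real.log p ≤ Real.log (p + q * exp (-(2 * u))) :=
    Real.log_le_log hp (by have := exp_pos (-(2 * u)); nlinarith)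
  unfold KK LL
  nlinarith

lemma KK_le {p q : ℝ} (hp : 0 < p) (hq : 0 < q) (hpq : p + q = 1) (u : ℝ) :
    KK p q u ≤ - Real.log p - Real.log q := by
  have a := Real.log_nonpos hp.le (by linarith)
  have b := Real.log_nonpos hq.le (by linarith)
  rcases le_total 0 u with h | h
  · linarith [KK_le_aux hp hq u h]
  · have := KK_le_aux hq hp (-u) (by linarith)
    have h1 := TT_neg hq hp u
    have h2 := LL_neg hq hp u
    simp only [KK, h1, h2] at this
    unfold KK
    linarith

lemma gfun_eq {m : ℝ} (hm : m ∈ Set.Ioo (-1 : ℝ) 1) (u : ℝ) :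
    gfun m u = LL ((1 + m) / 2) ((1 - m) / 2) u - m * u := by
  obtain ⟨h1, h2⟩ := hm
  have hp : 0 < (1 + m) / 2 := by linarith
  have hq : 0 < (1 - m) / 2 := by linarith
  unfold gfun LL
  have : (1 + m) / 2 * exp (u * (1 - m)) + (1 - m) / 2 * exp (-(u * (1 + m)))
      = exp (u * (1 - m)) * ((1 + m) / 2 + (1 - m) / 2 * exp (-(2 * u))) := by
    have h : exp (-(u * (1 + m))) = exp (u * (1 - m)) * exp (-(2 * u)) := by
      rw [← Real.exp_add]; ring_nf
    rw [h]; ring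
  have h0 := exp_pos (-(2 * u))
  rw [this, Real.log_mul (by positivity) (by positivity), Real.log_exp]
  ring

def g1 (m u : ℝ) : ℝ := TT ((1 + m) / 2) ((1 - m) / 2) u - m

section
variable {m : ℝ} (hm : m ∈ Set.Ioo (-1 : ℝ) 1)
include hm

lemma hp' : 0 < (1 + m) / 2 := by linarith [hm.1]
lemma hq' : 0 < (1 - m) / 2 := by linarith [hm.2]

lemma g_deriv (u : ℝ) : HasDerivAt (gfun m) (g1 m u) u := by
  have : gfun m = fun u => LL ((1 + m) / 2) ((1 - m) / 2) u - m * u := funext (gfun_eq hm)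
  rw [this]
  have := (LL_deriv (hp' hm) (hq' hm) u).sub ((hasDerivAt_id u).const_mul m)
  exact HasDerivAt.congr_deriv this (by simp [g1])

lemma g1_mono : StrictMono (g1 m) := fun u v h => by
  have := TT_mono (hp' hm) (hq' hm) h
  unfold g1; linarith

lemma g1_abs (u : ℝ) : |g1 m u| ≤ 2 := by
  have := abs_le.1 (TT_abs (hp' hm) (hq' hm) u)
  unfold g1; rw [abs_le]
  constructor <;> linarith [hm.1, hm.2]

lemma g1_cont : Continuous (g1 m) := (TT_cont (hp' hm) (hq' hm)).sub continuous_const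

omit hm in
lemma g1_zero : g1 m 0 = 0 := by
  unfold g1 TT
  simp
  ring_nf

lemma g_cont : Continuous (gfun m) :=
  continuous_iff_continuousAt.2 fun u => (g_deriv hm u).continuousAt

lemma g_zero : gfun m 0 = 0 := by
  rw [gfun_eq hm, LL_zero (by ring)]; simp

lemma g_nonneg (u : ℝ) : 0 ≤ gfun m u := by
  have := tangent (g_deriv hm) (g1_mono hm).monotone 0 u
  rw [g_zero hm, g1_zero] at this
  linarith

lemma g_K (u : ℝ) : u * g1 m u - gfun m u = KK ((1 + m) / 2) ((1 - m) / 2) u := by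
  rw [gfun_eq hm]; unfold g1 KK; ring

lemma g_le (u : ℝ) : |gfun m u| ≤ 2 * |u| := by
  rw [abs_of_nonneg (g_nonneg hm u)]
  have h1 := KK_nonneg (hp' hm) (hq' hm) (by ring) u
  rw [← g_K hm] at h1
  calc gfun m u ≤ u * g1 m u := by linarith
    _ ≤ |u * g1 m u| := le_abs_self _
    _ = |u| * |g1 m u| := abs_mul _ _
    _ ≤ |u| * 2 := by gcongr; exact g1_abs hm u
    _ = _ := by ring

end

def G1 (μ : Measure ℝ) (m lam : ℝ) : ℝ := ∫ x, x * g1 m (lam * x) ∂μ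

section
variable {m : ℝ} (hm : m ∈ Set.Ioo (-1 : ℝ) 1) {μ : Measure ℝ} (hA : Assumption1 μ)
include hA

lemma mu_zero : ∀ᵐ x ∂μ, x ≠ 0 := by
  have := hA.isProb
  obtain ⟨ε, hε, p, hp, h⟩ := hA.smallBall
  have h0 : μ {0} = 0 := by
    by_contra hne
    have hpos : 0 < (μ {0}).toReal := ENNReal.toReal_pos hne (measure_ne_top _ _)
    set r := (μ {0}).toReal
    have ht : 0 < min (ε / 2) (r / (2 * p)) := by positivity
    have h1 := h (min (ε / 2) (r / (2 * p))) ⟨ht.le, by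
      have := min_le_left (ε / 2) (r / (2 * p)); linarith⟩
    have h2 : r ≤ (μ {x : ℝ | |x| < min (ε / 2) (r / (2 * p))}).toReal := by
      apply ENNReal.toReal_mono (measure_ne_top _ _)
      apply measure_mono
      intro x hx
      simp only [mem_singleton_iff] at hx
      subst hx
      simpa using ht
    have h3 : p * min (ε / 2) (r / (2 * p)) ≤ p * (r / (2 * p)) := by
      gcongr; exact min_le_right _ _
    have h4 : p * (r / (2 * p)) = r / 2 := by field_simp
    linarith
  rw [ae_iff]
  simpa using h0

include hm

lemma int_G (lam : ℝ) : Integrable (fun x => gfun m (lam * x)) μ := by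
  refine (hA.intAbs.const_mul (2 * |lam|)).mono'
    ((g_cont hm).comp (continuous_const.mul continuous_id)).aestronglyMeasurable ?_
  filter_upwards with x
  have := g_le hm (lam * x)
  rw [abs_mul] at this
  rw [Real.norm_eq_abs]; linarith

lemma bd_G1 (lam x : ℝ) : ‖x * g1 m (lam * x)‖ ≤ 2 * |x| := by
  rw [Real.norm_eq_abs, abs_mul]
  have := g1_abs hm (lam * x)
  nlinarith [abs_nonneg x]

lemma meas_G1 (lam : ℝ) : AEStronglyMeasurable (fun x => x * g1 m (lam * x)) μ :=
  (continuous_id.mul ((g1_cont hm).comp (continuous_const.mul continuous_id))).aestronglyMeasurable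

lemma int_G1 (lam : ℝ) : Integrable (fun x => x * g1 m (lam * x)) μ :=
  (hA.intAbs.const_mul 2).mono' (meas_G1 hm hA lam) (ae_of_all _ fun x => bd_G1 hm hA lam x)

lemma G_deriv (lam : ℝ) : HasDerivAt (Gf μ m) (G1 μ m lam) lam := by
  refine (hasDerivAt_integral_of_dominated_loc_of_deriv_le (μ := μ) (x₀ := lam) (s := univ)
    (F := fun l x => gfun m (l * x)) (F' := fun l x => x * g1 m (l * x))
    (bound := fun x => 2 * |x|) univ_mem
    (Eventually.of_forall fun l => (int_G hm hA l).aestronglyMeasurable) (int_G hm hA lam)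
    (meas_G1 hm hA lam) (ae_of_all _ fun x l _ => bd_G1 hm hA l x) (hA.intAbs.const_mul 2)
    (ae_of_all _ fun x l _ => ?_)).2
  have h1 : HasDerivAt (fun l : ℝ => l * x) x l := by
    simpa using (hasDerivAt_id l).mul_const x
  have := (g_deriv hm (l * x)).comp l h1
  rw [mul_comm]
  exact this

lemma G1_mono : StrictMono (G1 μ m) := by
  intro l l' h
  have := hA.isProb
  have hlt : ∀ x : ℝ, x ≠ 0 → x * g1 m (l * x) < x * g1 m (l' * x) := by
    intro x hx
    rcases lt_or_gt_of_ne hx with hx | hx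
    · have := g1_mono hm (show l' * x < l * x by nlinarith)
      nlinarith
    · have := g1_mono hm (show l * x < l' * x by nlinarith)
      nlinarith
  have hae : ∀ᵐ x ∂μ, x * g1 m (l * x) < x * g1 m (l' * x) :=
    (mu_zero hA).mono fun x hx => hlt x hx
  refine lt_of_le_of_ne (integral_mono_ae (int_G1 hm hA l) (int_G1 hm hA l')
    (hae.mono fun x hx => hx.le)) fun he => ?_
  have h2 := (integral_eq_iff_of_ae_le (int_G1 hm hA l) (int_G1 hm hA l')
    (hae.mono fun x hx => hx.le)).1 he
  obtain ⟨x, h3, h4⟩ := (hae.and h2).exists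
  exact h3.ne h4

lemma G1_cont : Continuous (G1 μ m) := by
  refine continuous_of_dominated (fun l => meas_G1 hm hA l)
    (fun l => ae_of_all _ fun x => bd_G1 hm hA l x) (hA.intAbs.const_mul 2)
    (ae_of_all _ fun x => ?_)
  exact continuous_const.mul ((g1_cont hm).comp (continuous_id.mul continuous_const))

omit hm hA in
lemma G1_zero : G1 μ m 0 = 0 := by simp [G1, g1_zero]

lemma G_zero : Gf μ m 0 = 0 := by simp [Gf, g_zero hm]

lemma G1_tendsto : Tendsto (G1 μ m) atTop (𝓝 (sigmaBar μ m)) := by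
  have hi : Integrable (fun x : ℝ => x) μ := by
    refine hA.intAbs.mono' measurable_id.aestronglyMeasurable (ae_of_all _ fun x => ?_)
    simp
  have : sigmaBar μ m = ∫ x, (-m * x + |x|) ∂μ := by
    rw [integral_add (hi.const_mul _) hA.intAbs, integral_const_mul]; rfl
  rw [this]
  refine tendsto_integral_filter_of_dominated_convergence (fun x => 2 * |x|)
    (Eventually.of_forall fun l => meas_G1 hm hA l)
    (Eventually.of_forall fun l => ae_of_all _ fun x => bd_G1 hm hA l x) (hA.intAbs.const_mul 2)
    ((mu_zero hA).mono fun x hx => ?_)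
  rcases lt_or_gt_of_ne hx with hx | hx
  · have := (((TT_tendsto' (hp' hm) (hq' hm)).comp
      (tendsto_id.atTop_mul_const_of_neg hx)).sub_const m).const_mul x
    rw [abs_of_neg hx, show -m * x + -x = x * (-1 - m) by ring]
    exact this
  · have := (((TT_tendsto (hp' hm) (hq' hm)).comp
      (tendsto_id.atTop_mul_const hx)).sub_const m).const_mul x
    rw [abs_of_pos hx, show -m * x + x = x * (1 - m) by ring]
    exact this

lemma F_eq (l : ℝ) : l * G1 μ m l - Gf μ m l = ∫ x, KK ((1 + m) / 2) ((1 - m) / 2) (l * x) ∂μ := by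
  unfold G1 Gf
  rw [← integral_const_mul, ← integral_sub ((int_G1 hm hA l).const_mul l) (int_G hm hA l)]
  congr 1
  ext x
  rw [← g_K hm]; ring

lemma F_tendsto : Tendsto (fun l => l * G1 μ m l - Gf μ m l) atTop (𝓝 (gammaBar μ m)) := by
  have := hA.isProb
  have hp := hp' hm
  have hq := hq' hm
  have hlog : ∀ x : ℝ, x ≠ 0 → Real.log (1 + Real.sign x * m) =
      (if x < 0 then Real.log ((1 - m) / 2) else Real.log ((1 + m) / 2)) + Real.log 2 := by
    intro x hx
    rcases lt_or_gt_of_ne hx with hx | hx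
    · rw [Real.sign_of_neg hx, if_pos hx, ← Real.log_mul hq.ne' (by norm_num)]
      congr 1; ring
    · rw [Real.sign_of_pos hx, if_neg (not_lt.2 hx.le), ← Real.log_mul hp.ne' (by norm_num)]
      congr 1; ring
  have hint : Integrable (fun x : ℝ =>
      if x < 0 then Real.log ((1 - m) / 2) else Real.log ((1 + m) / 2)) μ := by
    refine Integrable.mono' (integrable_const (|Real.log ((1 - m) / 2)| + |Real.log ((1 + m) / 2)|))
      (Measurable.ite measurableSet_Iio measurable_const measurable_const).aestronglyMeasurable
      (ae_of_all _ fun x => ?_)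
    rw [Real.norm_eq_abs]
    split_ifs
    · linarith [abs_nonneg (Real.log ((1 + m) / 2))]
    · linarith [abs_nonneg (Real.log ((1 - m) / 2))]
  have hγ : gammaBar μ m = ∫ x : ℝ,
      -(if x < 0 then Real.log ((1 - m) / 2) else Real.log ((1 + m) / 2)) ∂μ := by
    unfold gammaBar
    rw [integral_congr_ae ((mu_zero hA).mono fun x hx => hlog x hx),
      integral_add hint (integrable_const _), integral_neg]
    simp
  rw [hγ]
  simp_rw [F_eq hm hA]
  have hKc : Continuous (KK ((1 + m) / 2) ((1 - m) / 2)) := by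
    have : KK ((1 + m) / 2) ((1 - m) / 2) = fun u => u * g1 m u - gfun m u :=
      funext fun u => (g_K hm u).symm
    rw [this]
    exact (continuous_id.mul (g1_cont hm)).sub (g_cont hm)
  refine tendsto_integral_filter_of_dominated_convergence
    (fun x => -Real.log ((1 + m) / 2) - Real.log ((1 - m) / 2))
    (Eventually.of_forall fun l =>
      (hKc.comp (continuous_const.mul continuous_id)).aestronglyMeasurable)
    (Eventually.of_forall fun l => ae_of_all _ fun x => ?_) (integrable_const _)
    ((mu_zero hA).mono fun x hx => ?_)
  · rw [Real.norm_eq_abs, abs_of_nonneg (KK_nonneg hp hq (by ring) _)]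
    exact KK_le hp hq (by ring) _
  · rcases lt_or_gt_of_ne hx with hx | hx
    · rw [if_pos hx]
      exact (KK_tendsto' hp hq).comp (tendsto_id.atTop_mul_const_of_neg hx)
    · rw [if_neg (not_lt.2 hx.le)]
      exact (KK_tendsto hp hq).comp (tendsto_id.atTop_mul_const hx)

lemma F_mono {l l' : ℝ} (hl : 0 < l) (h : l < l') :
    l * G1 μ m l - Gf μ m l < l' * G1 μ m l' - Gf μ m l' := by
  have h1 := tangent (G_deriv hm hA) (G1_mono hm hA).monotone l' l
  have h2 := G1_mono hm hA h
  nlinarith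

lemma Gstar_eq (l : ℝ) : Gstar μ m (G1 μ m l) = l * G1 μ m l - Gf μ m l := by
  have key : ∀ l', l' * G1 μ m l - Gf μ m l' ≤ l * G1 μ m l - Gf μ m l := by
    intro l'
    have h1 := tangent (G_deriv hm hA) (G1_mono hm hA).monotone l l'
    linarith
  unfold Gstar
  apply le_antisymm
  · exact ciSup_le key
  · exact le_ciSup (f := fun l' => l' * G1 μ m l - Gf μ m l') ⟨_, by rintro _ ⟨y, rfl⟩; exact key y⟩ l

lemma ex_lam {a : ℝ} (ha : a ∈ Ioo 0 (sigmaBar μ m)) : ∃ l, 0 < l ∧ G1 μ m l = a := by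
  obtain ⟨M, hM, hM0⟩ := (((G1_tendsto hm hA).eventually (lt_mem_nhds ha.2)).and
    (eventually_gt_atTop 0)).exists
  obtain ⟨l, hl, he⟩ := intermediate_value_Ioo hM0.le (G1_cont hm hA).continuousOn
    (show a ∈ Ioo (G1 μ m 0) (G1 μ m M) by rw [G1_zero]; exact ⟨ha.1, hM⟩)
  exact ⟨l, hl.1, he⟩

lemma ex_F {c : ℝ} (hc : c ∈ Ioo 0 (gammaBar μ m)) :
    ∃ l, 0 < l ∧ l * G1 μ m l - Gf μ m l = c := by
  obtain ⟨M, hM, hM0⟩ := (((F_tendsto hm hA).eventually (lt_mem_nhds hc.2)).and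
    (eventually_gt_atTop 0)).exists
  have hcont : Continuous (fun l => l * G1 μ m l - Gf μ m l) :=
    (continuous_id.mul (G1_cont hm hA)).sub
      (continuous_iff_continuousAt.2 fun u => (G_deriv hm hA u).continuousAt)
  obtain ⟨l, hl, he⟩ := intermediate_value_Ioo hM0.le hcont.continuousOn
    (show c ∈ Ioo _ _ from ⟨by simpa [G_zero hm hA] using hc.1, hM⟩)
  exact ⟨l, hl.1, he⟩

end

theorem stmt2 (μ : Measure ℝ) (hA : Assumption1 μ) (m c : ℝ)
    (hm : m ∈ Set.Ioo (-1 : ℝ) 1) (hc : c ∈ Set.Ioo 0 (gammaBar μ m)) :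
    (∃! a : ℝ, a ∈ Set.Ioo 0 (sigmaBar μ m) ∧ Gstar μ m a = c) ∧
    (∀ a ∈ Set.Ioo 0 (sigmaBar μ m), Gstar μ m a = c →
      ∃! lam : ℝ, lam ∈ Set.Ioi (0 : ℝ) ∧ deriv (Gf μ m) lam = a) := by
  constructor
  · obtain ⟨l, hl, he⟩ := ex_F hm hA hc
    have hmono := G1_mono hm hA
    refine ⟨G1 μ m l, ⟨⟨?_, ?_⟩, ?_⟩, ?_⟩
    · have := hmono hl
      rwa [G1_zero] at this
    · exact lt_of_lt_of_le (hmono (lt_add_one l)) (hmono.monotone.ge_of_tendsto (G1_tendsto hm hA) _)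
    · rw [Gstar_eq hm hA, he]
    · rintro a ⟨ha, hac⟩
      obtain ⟨l', hl', rfl⟩ := ex_lam hm hA ha
      rw [Gstar_eq hm hA] at hac
      rcases lt_trichotomy l l' with h | h | h
      · have := F_mono hm hA hl h
        linarith
      · rw [h]
      · have := F_mono hm hA hl' h
        linarith
  · intro a ha _
    obtain ⟨l, hl, he⟩ := ex_lam hm hA ha
    refine ⟨l, ⟨hl, by rw [(G_deriv hm hA l).deriv, he]⟩, ?_⟩
    rintro l' ⟨_, h'⟩
    rw [(G_deriv hm hA l').deriv, ← he] at h'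
    exact (G1_mono hm hA).injective h'
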